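/- arXiv:2311.08882 — 3 statements merged into one kernel-verified Lean document; each statement's English description precedes it below -/
import Mathlib

section
/- Front-door adjustment (classical case of the front-door identifiability proposition): in the classical front-door model, for all x : X and y : Y, P_do(y|x) = ∑_z (P_XZ(x,z)/P_X(x)) * ∑_{x'} (P_XZY(x',z,y)/P_XZ(x',z)) * P_X(x'). In particular, the interventional distribution of Y under setting X to x is computable from the observational joint distribution alone. -/
open Finset

/-!
The front-door formula is two back-door adjustments composed. Nothing confounds `X` and `Z`, so
`P(z | do(x)) = P(z | x)`. The only back-door path from `Z` to `Y` goes through `X`, so averaging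
`P(y | x', z)` over the marginal of `X` yields `P(y | do(z))`. Since `X` reaches `Y` only
through `Z`, the effect of `x` on `Y` is the `P(z | do(x))`-average of `P(y | do(z))`.
-/

namespace FrontDoor

variable {U X Z Y K : Type*}

/-- The observational joint weight `P(u, x, z, y)` of the front-door model in which `U` causes `X`
and `Y`, `X` causes `Z`, and `Z` causes `Y`. The weights take values in an arbitrary `K`, so that
signed or unnormalised kernels are allowed. -/
def joint [Mul K] (p : U → K) (q : U → X → K) (r : X → Z → K) (s : Z → U → Y → K)
    (u : U) (x : X) (z : Z) (y : Y) : K :=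
  p u * q u x * r x z * s z u y

/-- The marginal `P(x)` of a joint weight on `U × X × Z × Y`. -/
def marginalX [AddCommMonoid K] [Fintype U] [Fintype Z] [Fintype Y]
    (P : U → X → Z → Y → K) (x : X) : K :=
  ∑ u, ∑ z, ∑ y, P u x z y

/-- The marginal `P(x, z)` of a joint weight on `U × X × Z × Y`. -/
def marginalXZ [AddCommMonoid K] [Fintype U] [Fintype Y]
    (P : U → X → Z → Y → K) (x : X) (z : Z) : K :=
  ∑ u, ∑ y, P u x z y

/-- The observable marginal `P(x, z, y)` of a joint weight on `U × X × Z × Y`. -/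
def marginalXZY [AddCommMonoid K] [Fintype U]
    (P : U → X → Z → Y → K) (x : X) (z : Z) (y : Y) : K :=
  ∑ u, P u x z y

/-- The interventional weight `P(y | do(x))`: the factor `q u x` is removed from the joint weight
before summing out `U` and `Z`. -/
def doX [NonUnitalNonAssocSemiring K] [Fintype U] [Fintype Z]
    (p : U → K) (r : X → Z → K) (s : Z → U → Y → K) (x : X) (y : Y) : K :=
  ∑ u, ∑ z, p u * r x z * s z u y

/-- The interventional weight `P(y | do(z))`: the mechanism `r` that produces `z` is removed, after
which `X` sums out and only `U` remains to be averaged. -/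
def doZ [NonUnitalNonAssocSemiring K] [Fintype U]
    (p : U → K) (s : Z → U → Y → K) (z : Z) (y : Y) : K :=
  ∑ u, p u * s z u y

variable {p : U → K} {q : U → X → K} {r : X → Z → K} {s : Z → U → Y → K}

theorem marginalX_joint [Semiring K] [Fintype U] [Fintype Z] [Fintype Y]
    {x : X} (hr1 : ∑ z, r x z = 1) (hs1 : ∀ z u, ∑ y, s z u y = 1) :
    marginalX (joint p q r s) x = ∑ u, p u * q u x := by
  simp only [marginalX, joint, ← mul_sum, hs1, hr1, mul_one]

theorem marginalX_joint_pos [Semiring K] [PartialOrder K] [IsStrictOrderedRing K]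
    [Fintype U] [Nonempty U] [Fintype Z] [Fintype Y]
    {x : X} (hp : ∀ u, 0 < p u) (hq : ∀ u, 0 < q u x)
    (hr1 : ∑ z, r x z = 1) (hs1 : ∀ z u, ∑ y, s z u y = 1) :
    0 < marginalX (joint p q r s) x := by
  rw [marginalX_joint hr1 hs1]
  exact sum_pos (fun u _ => mul_pos (hp u) (hq u)) univ_nonempty

theorem marginalXZ_joint [Semiring K] [Fintype U] [Fintype Y]
    {z : Z} (hs1 : ∀ u, ∑ y, s z u y = 1) (x : X) :
    marginalXZ (joint p q r s) x z = (∑ u, p u * q u x) * r x z := by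
  simp only [marginalXZ, joint, ← mul_sum, hs1, mul_one, sum_mul]

theorem marginalXZY_joint [CommSemiring K] [Fintype U] (x : X) (z : Z) (y : Y) :
    marginalXZY (joint p q r s) x z y = (∑ u, p u * q u x * s z u y) * r x z := by
  simp only [marginalXZY, joint, sum_mul, mul_right_comm _ (r x z)]

theorem sum_sum_mul_mul_eq_doZ [CommSemiring K] [Fintype U] [Fintype X]
    (hq1 : ∀ u, ∑ x, q u x = 1) (z : Z) (y : Y) :
    ∑ x, ∑ u, p u * q u x * s z u y = doZ p s z y := by
  rw [sum_comm]
  simp only [doZ, ← sum_mul, ← mul_sum, hq1, mul_one]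

theorem doX_eq_sum_mul_doZ [CommSemiring K] [Fintype U] [Fintype Z] (x : X) (y : Y) :
    doX p r s x y = ∑ z, r x z * doZ p s z y := by
  simp only [doX, doZ, mul_sum, mul_left_comm (r x _), ← mul_assoc]
  exact sum_comm

theorem marginalXZ_div_marginalX [Semifield K] [Fintype U] [Fintype Z] [Fintype Y]
    {x : X} (hr1 : ∑ z, r x z = 1) (hs1 : ∀ z u, ∑ y, s z u y = 1)
    (hx : marginalX (joint p q r s) x ≠ 0) (z : Z) :
    marginalXZ (joint p q r s) x z / marginalX (joint p q r s) x = r x z := by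
  rw [marginalX_joint hr1 hs1] at hx ⊢
  rw [marginalXZ_joint (hs1 z), mul_div_cancel_left₀ _ hx]

theorem sum_marginalXZY_div_mul_marginalX [Semifield K]
    [Fintype U] [Fintype X] [Fintype Z] [Fintype Y]
    (hq1 : ∀ u, ∑ x, q u x = 1) (hr1 : ∀ x, ∑ z, r x z = 1)
    (hs1 : ∀ z u, ∑ y, s z u y = 1) (hX : ∀ x, marginalX (joint p q r s) x ≠ 0)
    {z : Z} (hr : ∀ x, r x z ≠ 0) (y : Y) :
    ∑ x, marginalXZY (joint p q r s) x z y / marginalXZ (joint p q r s) x z *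
        marginalX (joint p q r s) x = doZ p s z y := by
  rw [← sum_sum_mul_mul_eq_doZ hq1]
  refine sum_congr rfl fun x _ => ?_
  rw [marginalXZY_joint, marginalXZ_joint (hs1 z), mul_div_mul_right _ _ (hr x),
    ← marginalX_joint (hr1 x) hs1, div_mul_cancel₀ _ (hX x)]

end FrontDoor

open FrontDoor

theorem frontdoor_adjustment_general {U X Z Y K : Type*} [Semifield K]
    [Fintype U] [Fintype X] [Fintype Z] [Fintype Y]
    {p : U → K} {q : U → X → K} {r : X → Z → K} {s : Z → U → Y → K}
    (hq1 : ∀ u, ∑ x, q u x = 1) (hr : ∀ x z, r x z ≠ 0) (hr1 : ∀ x, ∑ z, r x z = 1)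
    (hs1 : ∀ z u, ∑ y, s z u y = 1) (hX : ∀ x, marginalX (joint p q r s) x ≠ 0)
    (x : X) (y : Y) :
    doX p r s x y =
      ∑ z, (marginalXZ (joint p q r s) x z / marginalX (joint p q r s) x) *
        ∑ x', (marginalXZY (joint p q r s) x' z y / marginalXZ (joint p q r s) x' z) *
          marginalX (joint p q r s) x' := by
  rw [doX_eq_sum_mul_doZ]
  refine sum_congr rfl fun z _ => ?_
  rw [marginalXZ_div_marginalX (hr1 x) hs1 (hX x),
    sum_marginalXZY_div_mul_marginalX hq1 hr1 hs1 hX (hr · z)]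

/-- Front-door adjustment (classical case): in the classical front-door
model, for all `x : X` and `y : Y`,
`P_do(y|x) = ∑ z, (P_XZ(x,z)/P_X(x)) * ∑ x', (P_XZY(x',z,y)/P_XZ(x',z)) * P_X(x')`.
In particular, the interventional distribution of `Y` under setting `X` to `x` is
computable from the observational joint distribution alone. -/
theorem frontdoor_adjustment
    (U X Z Y : Type) [Fintype U] [Fintype X] [Fintype Z] [Fintype Y]
    [Nonempty U] [Nonempty X] [Nonempty Z] [Nonempty Y]
    (p : U → ℝ) (q : U → X → ℝ) (r : X → Z → ℝ) (s : Z → U → Y → ℝ)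
    (hp : ∀ u, 0 < p u) (hp1 : ∑ u, p u = 1)
    (hq : ∀ u x, 0 < q u x) (hq1 : ∀ u, ∑ x, q u x = 1)
    (hr : ∀ x z, 0 < r x z) (hr1 : ∀ x, ∑ z, r x z = 1)
    (hs : ∀ z u y, 0 < s z u y) (hs1 : ∀ z u, ∑ y, s z u y = 1)
    (P : U → X → Z → Y → ℝ)
    (hP : ∀ u x z y, P u x z y = p u * q u x * r x z * s z u y)
    (PX : X → ℝ) (hPX : ∀ x, PX x = ∑ u, ∑ z, ∑ y, P u x z y)
    (PXZ : X → Z → ℝ) (hPXZ : ∀ x z, PXZ x z = ∑ u, ∑ y, P u x z y)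
    (PXZY : X → Z → Y → ℝ) (hPXZY : ∀ x z y, PXZY x z y = ∑ u, P u x z y)
    (Pdo : X → Y → ℝ)
    (hPdo : ∀ x y, Pdo x y = ∑ u, ∑ z, p u * r x z * s z u y) :
    ∀ (x : X) (y : Y),
      Pdo x y =
        ∑ z, (PXZ x z / PX x) * ∑ x', (PXZY x' z y / PXZ x' z) * PX x' := by
  simp only [hPdo, hPXZY, hPXZ, hPX, hP]
  exact frontdoor_adjustment_general hq1 (fun x z => (hr x z).ne') hr1 hs1
    fun x => (marginalX_joint_pos hp (hq · x) (hr1 x) hs1).ne'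
end

section
/- Local process tomography (the paper's proposition, case of CPM): if two ℂ-linear maps Φ, Ψ : Matrix (Fin n × Fin m) (Fin n × Fin m) ℂ →ₗ[ℂ] Matrix (Fin p × Fin q) (Fin p × Fin q) ℂ satisfy Tr[(|v⟩⟨v| ⊗ₖ |w⟩⟨w|) * Φ(ρ ⊗ₖ σ)] = Tr[(|v⟩⟨v| ⊗ₖ |w⟩⟨w|) * Ψ(ρ ⊗ₖ σ)] for all density matrices ρ on ℂ^n and σ on ℂ^m and all unit vectors v : Fin p → ℂ and w : Fin q → ℂ, then Φ = Ψ; that is, a process on a bipartite system is determined by its generalized matrix elements with respect to product states and product effects. -/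
open Matrix Kronecker ComplexOrder

/-!
Every Hermitian matrix is a real combination of pure states (the projections onto its eigenvectors),
and every complex matrix is `H + iK` with `H`, `K` Hermitian, so pure states span the complex
matrix algebra. Kronecker products of spanning sets span, so a linear map on the bipartite algebra
is determined by its values on product states. Since the trace pairing is nondegenerate, each of
these values is determined by its pairings with product effects.
-/

section Spanning

variable {R : Type*} [CommSemiring R]

theorem span_image2_kronecker_eq_top {l m n p : Type*} [Finite l] [Finite m] [Finite n] [Finite p]
    {S : Set (Matrix l m R)} {T : Set (Matrix n p R)}
    (hS : Submodule.span R S = ⊤) (hT : Submodule.span R T = ⊤) :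
    Submodule.span R (Set.image2 (· ⊗ₖ ·) S T) = ⊤ := by
  classical
  have := Fintype.ofFinite (l × n)
  have span_eq_map₂ : Submodule.span R (Set.image2 (· ⊗ₖ ·) S T) =
      Submodule.map₂ kroneckerBilinear ⊤ ⊤ := by
    rw [← hS, ← hT, Submodule.map₂_span_span]
    rfl
  rw [span_eq_map₂, ← top_le_iff, ← (Matrix.stdBasis R (l × n) (m × p)).span_eq, Submodule.span_le]
  rintro _ ⟨⟨⟨i, k⟩, j, r⟩, rfl⟩
  rw [stdBasis_eq_single, ← mul_one (1 : R), ← single_kronecker_single]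
  exact Submodule.apply_mem_map₂ _ Submodule.mem_top Submodule.mem_top

theorem eq_of_trace_mul_left_eq_of_span_eq_top {m n : Type*} [Fintype m] [Fintype n]
    {S : Set (Matrix n m R)} (hS : Submodule.span R S = ⊤) {A B : Matrix m n R}
    (h : ∀ E ∈ S, (E * A).trace = (E * B).trace) : A = B := by
  have pairing_eq : traceLinearMap n R R ∘ₗ mulRightLinearMap n R A =
      traceLinearMap n R R ∘ₗ mulRightLinearMap n R B :=
    LinearMap.ext_on hS h
  exact ext_iff_trace_mul_left.mpr (LinearMap.congr_fun pairing_eq)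

theorem linearMap_eq_of_trace_kronecker_mul_eq
    {l m n p l' m' n' p' : Type*} [Finite l] [Finite m] [Finite n] [Finite p]
    [Fintype l'] [Fintype m'] [Fintype n'] [Fintype p']
    {S : Set (Matrix l m R)} {T : Set (Matrix n p R)}
    {E : Set (Matrix m' l' R)} {F : Set (Matrix p' n' R)}
    (hS : Submodule.span R S = ⊤) (hT : Submodule.span R T = ⊤)
    (hE : Submodule.span R E = ⊤) (hF : Submodule.span R F = ⊤)
    {Φ Ψ : Matrix (l × n) (m × p) R →ₗ[R] Matrix (l' × n') (m' × p') R}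
    (h : ∀ A ∈ S, ∀ B ∈ T, ∀ C ∈ E, ∀ D ∈ F,
      ((C ⊗ₖ D) * Φ (A ⊗ₖ B)).trace = ((C ⊗ₖ D) * Ψ (A ⊗ₖ B)).trace) :
    Φ = Ψ := by
  refine LinearMap.ext_on (span_image2_kronecker_eq_top hS hT) ?_
  rintro _ ⟨A, hA, B, hB, rfl⟩
  refine eq_of_trace_mul_left_eq_of_span_eq_top (span_image2_kronecker_eq_top hE hF) ?_
  rintro _ ⟨C, hC, D, hD, rfl⟩
  exact h A hA B hB C hC D hD

end Spanning

section PureStates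

variable {𝕜 n : Type*} [RCLike 𝕜] [Fintype n]

variable (𝕜 n) in
/-- The pure states `|v⟩⟨v|`, for unit vectors `v`, of the quantum system with Hilbert space `𝕜ⁿ`.
The normalization is spelled out because the norm on `n → 𝕜` is the supremum norm. -/
def pureStates : Set (Matrix n n 𝕜) :=
  {ρ | ∃ v : n → 𝕜, ∑ i, ‖v i‖ ^ 2 = 1 ∧ ρ = vecMulVec v (star v)}

theorem posSemidef_of_mem_pureStates {ρ : Matrix n n 𝕜} (hρ : ρ ∈ pureStates 𝕜 n) :
    ρ.PosSemidef := by
  obtain ⟨v, -, rfl⟩ := hρ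
  exact posSemidef_vecMulVec_self_star v

theorem trace_eq_one_of_mem_pureStates {ρ : Matrix n n 𝕜} (hρ : ρ ∈ pureStates 𝕜 n) :
    ρ.trace = 1 := by
  obtain ⟨v, hv, rfl⟩ := hρ
  simp only [trace_vecMulVec, dotProduct, Pi.star_apply, RCLike.star_def, RCLike.mul_conj]
  exact_mod_cast hv

theorem eq_sum_eigenvalues_smul_vecMulVec [DecidableEq n] {A : Matrix n n 𝕜}
    (hA : A.IsHermitian) :
    A = ∑ k, hA.eigenvalues k •
      vecMulVec (⇑(hA.eigenvectorBasis k)) (star ⇑(hA.eigenvectorBasis k)) := by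
  conv_lhs => rw [hA.spectral_theorem, Unitary.conjStarAlgAut_apply]
  ext i j
  rw [mul_apply, Matrix.sum_apply]
  refine Finset.sum_congr rfl fun k _ => ?_
  simp only [mul_diagonal, vecMulVec_apply, star_apply, Matrix.smul_apply, Pi.star_apply,
    IsHermitian.eigenvectorUnitary_apply, Function.comp_apply, RCLike.real_smul_eq_coe_mul]
  ring

theorem vecMulVec_eigenvectorBasis_mem_pureStates [DecidableEq n] {A : Matrix n n 𝕜}
    (hA : A.IsHermitian) (k : n) :
    vecMulVec (⇑(hA.eigenvectorBasis k)) (star ⇑(hA.eigenvectorBasis k)) ∈ pureStates 𝕜 n := by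
  refine ⟨_, ?_, rfl⟩
  rw [← EuclideanSpace.norm_sq_eq, hA.eigenvectorBasis.norm_eq_one, one_pow]

theorem mem_span_real_pureStates_of_isHermitian {A : Matrix n n 𝕜} (hA : A.IsHermitian) :
    A ∈ Submodule.span ℝ (pureStates 𝕜 n) := by
  classical
  rw [eq_sum_eigenvalues_smul_vecMulVec hA]
  exact Submodule.sum_mem _ fun k _ => Submodule.smul_mem _ _ <|
    Submodule.subset_span (vecMulVec_eigenvectorBasis_mem_pureStates hA k)

theorem span_pureStates_eq_top : Submodule.span ℂ (pureStates ℂ n) = ⊤ := by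
  rw [← top_le_iff, ← span_selfAdjoint, Submodule.span_le]
  intro A hA
  exact Submodule.span_subset_span ℝ ℂ _ (mem_span_real_pureStates_of_isHermitian hA)

end PureStates

theorem local_process_tomography_general
    {n m p q : Type*} [Fintype n] [Fintype m] [Fintype p] [Fintype q]
    {Φ Ψ : Matrix (n × m) (n × m) ℂ →ₗ[ℂ] Matrix (p × q) (p × q) ℂ}
    (h : ∀ ρ ∈ pureStates ℂ n, ∀ σ ∈ pureStates ℂ m, ∀ E ∈ pureStates ℂ p, ∀ F ∈ pureStates ℂ q,
      ((E ⊗ₖ F) * Φ (ρ ⊗ₖ σ)).trace = ((E ⊗ₖ F) * Ψ (ρ ⊗ₖ σ)).trace) :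
    Φ = Ψ :=
  linearMap_eq_of_trace_kronecker_mul_eq span_pureStates_eq_top span_pureStates_eq_top
    span_pureStates_eq_top span_pureStates_eq_top h

/-- Local process tomography (CPM case): if two ℂ-linear maps
`Φ, Ψ : Matrix (Fin n × Fin m) (Fin n × Fin m) ℂ →ₗ[ℂ] Matrix (Fin p × Fin q) (Fin p × Fin q) ℂ`
satisfy `Tr[(|v⟩⟨v| ⊗ₖ |w⟩⟨w|) * Φ(ρ ⊗ₖ σ)] = Tr[(|v⟩⟨v| ⊗ₖ |w⟩⟨w|) * Ψ(ρ ⊗ₖ σ)]` for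
all density matrices `ρ` on `ℂ^n`, `σ` on `ℂ^m` and all unit vectors `v : Fin p → ℂ`,
`w : Fin q → ℂ`, then `Φ = Ψ`: a process on a bipartite system is determined by its
generalized matrix elements with respect to product states and product effects. -/
theorem local_process_tomography
    (n m p q : ℕ)
    (Φ Ψ : Matrix (Fin n × Fin m) (Fin n × Fin m) ℂ
            →ₗ[ℂ] Matrix (Fin p × Fin q) (Fin p × Fin q) ℂ)
    (h : ∀ (ρ : Matrix (Fin n) (Fin n) ℂ) (σ : Matrix (Fin m) (Fin m) ℂ)
        (v : Fin p → ℂ) (w : Fin q → ℂ),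
      ρ.PosSemidef → ρ.trace = 1 → σ.PosSemidef → σ.trace = 1 →
      (∑ i, ‖v i‖ ^ 2 = 1) → (∑ i, ‖w i‖ ^ 2 = 1) →
      ((vecMulVec v (star v) ⊗ₖ vecMulVec w (star w)) * Φ (ρ ⊗ₖ σ)).trace
        = ((vecMulVec v (star v) ⊗ₖ vecMulVec w (star w)) * Ψ (ρ ⊗ₖ σ)).trace) :
    Φ = Ψ := by
  refine local_process_tomography_general ?_
  rintro ρ hρ σ hσ _ ⟨v, hv, rfl⟩ _ ⟨w, hw, rfl⟩
  exact h ρ σ v w (posSemidef_of_mem_pureStates hρ) (trace_eq_one_of_mem_pureStates hρ)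
    (posSemidef_of_mem_pureStates hσ) (trace_eq_one_of_mem_pureStates hσ) hv hw
end

section
/- Adjustment lemma (ignored measurement on a discarded branch does not affect the other branch): let x : Matrix (Fin dU) (Fin dU) ℂ →ₗ[ℂ] Matrix (Fin dX) (Fin dX) ℂ be a trace-preserving linear map and let u : Matrix (Fin dU × Fin dV) (Fin dU × Fin dV) ℂ be any matrix. Then for every orthonormal basis (α_i) of Fin dX → ℂ, ∑_i Tr₁[(|α_i⟩⟨α_i| ⊗ₖ 1) * ((x ⊗ id)(u)) * (|α_i⟩⟨α_i| ⊗ₖ 1)] = Tr₁(u), where on the left Tr₁ is the partial trace over the Fin dX factor and on the right over the Fin dU factor. -/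
open Matrix Kronecker

/-- Partial trace over the first tensor factor:
`(ptrace₁ M) b b' = ∑ a, M (a, b) (a, b')`. -/
noncomputable def ptrace₁ {A B : Type} [Fintype A]
    (M : Matrix (A × B) (A × B) ℂ) : Matrix B B ℂ :=
  fun b b' => ∑ a, M (a, b) (a, b')

/-!
The statement factors as `∑ i, Tr₁[(K i ⊗ 1) W (L i ⊗ 1)] = Tr₁ W = Tr₁ u` with `W = (x ⊗ id) u`.
The first equality is the cyclicity of `Tr₁` for operators acting on the traced-out factor, which
moves `L i` next to `K i`, together with the completeness relation `∑ i, L i * K i = 1`. The second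
is linear in `u`, hence may be checked on Kronecker products `u = A ⊗ₖ B`, where both sides
are `Tr A • B`. A complete family of rank-one projections satisfies the completeness relation with
`K i = L i = |α i⟩⟨α i|`.
-/

/-- The partial trace `ptrace₁`, bundled as a linear map. -/
noncomputable def ptrace₁LinearMap (A B : Type) [Fintype A] :
    Matrix (A × B) (A × B) ℂ →ₗ[ℂ] Matrix B B ℂ where
  toFun := ptrace₁
  map_add' M N := by
    ext b b'
    exact Finset.sum_add_distrib
  map_smul' c M := by
    ext b b'
    exact (Finset.mul_sum ..).symm

@[simp]
theorem ptrace₁LinearMap_apply {A B : Type} [Fintype A] (M : Matrix (A × B) (A × B) ℂ) :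
    ptrace₁LinearMap A B M = ptrace₁ M :=
  rfl

theorem ptrace₁_kronecker {A B : Type} [Fintype A] (M : Matrix A A ℂ) (N : Matrix B B ℂ) :
    ptrace₁ (M ⊗ₖ N) = M.trace • N := by
  ext b b'
  simp [ptrace₁, trace, Finset.sum_mul]

theorem ptrace₁_kronecker_one_mul_comm {A A' B : Type} [Fintype A] [Fintype A'] [Fintype B]
    [DecidableEq B] (K : Matrix A A' ℂ) (W : Matrix (A' × B) (A × B) ℂ) :
    ptrace₁ ((K ⊗ₖ (1 : Matrix B B ℂ)) * W) = ptrace₁ (W * (K ⊗ₖ (1 : Matrix B B ℂ))) := by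
  ext b b'
  have left (a : A) : ((K ⊗ₖ (1 : Matrix B B ℂ)) * W) (a, b) (a, b') =
      ∑ a', K a a' * W (a', b) (a, b') := by
    simp [mul_apply, Fintype.sum_prod_type, one_apply]
  have right (a' : A') : (W * (K ⊗ₖ (1 : Matrix B B ℂ))) (a', b) (a', b') =
      ∑ a, K a a' * W (a', b) (a, b') := by
    simp [mul_apply, Fintype.sum_prod_type, one_apply, mul_comm]
  simp only [ptrace₁, left, right]
  exact Finset.sum_comm

theorem sum_ptrace₁_kronecker_one_mul_mul {A A' B : Type} {ι : Type*} [Fintype A] [Fintype A']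
    [Fintype B] [Fintype ι] [DecidableEq A] [DecidableEq B]
    {K : ι → Matrix A' A ℂ} {L : ι → Matrix A A' ℂ}
    (hLK : ∑ i, L i * K i = 1) (W : Matrix (A × B) (A × B) ℂ) :
    ∑ i, ptrace₁ ((K i ⊗ₖ (1 : Matrix B B ℂ)) * W * (L i ⊗ₖ (1 : Matrix B B ℂ))) = ptrace₁ W := by
  have sum_LK : ∑ i, (L i * K i) ⊗ₖ (1 : Matrix B B ℂ) = 1 := by
    rw [← one_kronecker_one, ← hLK]
    exact (LinearMap.map_sum₂ (kroneckerBilinear (R := ℂ)) _ _ _).symm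
  calc ∑ i, ptrace₁ ((K i ⊗ₖ (1 : Matrix B B ℂ)) * W * (L i ⊗ₖ (1 : Matrix B B ℂ)))
    _ = ∑ i, ptrace₁ (W * ((L i * K i) ⊗ₖ (1 : Matrix B B ℂ))) := by
      refine Finset.sum_congr rfl fun i _ => ?_
      rw [Matrix.mul_assoc, ptrace₁_kronecker_one_mul_comm, Matrix.mul_assoc,
        ← mul_kronecker_mul, Matrix.one_mul]
    _ = ptrace₁ (W * ∑ i, (L i * K i) ⊗ₖ (1 : Matrix B B ℂ)) := by
      simp only [← ptrace₁LinearMap_apply, ← map_sum, Matrix.mul_sum]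
    _ = ptrace₁ W := by rw [sum_LK, Matrix.mul_one]

theorem ext_linearMap_kronecker {R l m n p N : Type*} [CommSemiring R] [AddCommMonoid N]
    [Module R N] [Finite l] [Finite m] [Finite n] [Finite p]
    {f g : Matrix (l × n) (m × p) R →ₗ[R] N}
    (h : ∀ (A : Matrix l m R) (B : Matrix n p R), f (A ⊗ₖ B) = g (A ⊗ₖ B)) : f = g := by
  classical
  have := Fintype.ofFinite l
  have := Fintype.ofFinite m
  have := Fintype.ofFinite n
  have := Fintype.ofFinite p
  rw [← LinearMap.cancel_right (kroneckerLinearEquiv l m n p R).surjective]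
  exact TensorProduct.ext' h

theorem ptrace₁_tensor_id_of_trace_preserving {U V X : Type} [Fintype U] [Finite V] [Fintype X]
    {x : Matrix U U ℂ →ₗ[ℂ] Matrix X X ℂ} (hx : ∀ M, (x M).trace = M.trace)
    {xI : Matrix (U × V) (U × V) ℂ →ₗ[ℂ] Matrix (X × V) (X × V) ℂ}
    (hxI : ∀ (A : Matrix U U ℂ) (B : Matrix V V ℂ), xI (A ⊗ₖ B) = x A ⊗ₖ B)
    (u : Matrix (U × V) (U × V) ℂ) :
    ptrace₁ (xI u) = ptrace₁ u := by
  suffices ptrace₁LinearMap X V ∘ₗ xI = ptrace₁LinearMap U V from LinearMap.congr_fun this u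
  refine ext_linearMap_kronecker fun A B => ?_
  simp only [LinearMap.comp_apply, ptrace₁LinearMap_apply, hxI, ptrace₁_kronecker, hx]

theorem sum_vecMulVec_star_eq_one {R n : Type*} [CommSemiring R] [Star R] [Fintype n]
    [DecidableEq n] {α : n → n → R} (hα : ∀ i j, star (α i) ⬝ᵥ α j = if i = j then 1 else 0) :
    ∑ i, vecMulVec (α i) (star (α i)) = 1 := by
  have conjTranspose_mul : (of α)ᵀᴴ * (of α)ᵀ = 1 := by
    ext i j
    exact (hα i j).trans one_apply.symm
  rw [← mul_eq_one_comm.mp conjTranspose_mul]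
  ext k l
  simp [mul_apply, Matrix.sum_apply, vecMulVec_apply]

theorem isIdempotentElem_vecMulVec_star {R n : Type*} [Semiring R] [Star R] [Fintype n]
    {v : n → R} (hv : star v ⬝ᵥ v = 1) : IsIdempotentElem (vecMulVec v (star v)) := by
  rw [IsIdempotentElem, vecMulVec_mul_vecMulVec, hv, one_smul]

theorem sum_vecMulVec_star_mul_self_eq_one {R n : Type*} [CommSemiring R] [Star R] [Fintype n]
    [DecidableEq n] {α : n → n → R} (hα : ∀ i j, star (α i) ⬝ᵥ α j = if i = j then 1 else 0) :
    ∑ i, vecMulVec (α i) (star (α i)) * vecMulVec (α i) (star (α i)) = 1 := by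
  have idem (i : n) : IsIdempotentElem (vecMulVec (α i) (star (α i))) :=
    isIdempotentElem_vecMulVec_star (by rw [hα, if_pos rfl])
  simp only [(idem _).eq, sum_vecMulVec_star_eq_one hα]

theorem adjustment_lemma_general {U V X Y : Type} {ι : Type*} [Fintype U] [Fintype V] [Fintype X]
    [Fintype Y] [Fintype ι] [DecidableEq V] [DecidableEq X]
    (x : Matrix U U ℂ →ₗ[ℂ] Matrix X X ℂ) (hx : ∀ M, (x M).trace = M.trace)
    (xI : Matrix (U × V) (U × V) ℂ →ₗ[ℂ] Matrix (X × V) (X × V) ℂ)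
    (hxI : ∀ (A : Matrix U U ℂ) (B : Matrix V V ℂ), xI (A ⊗ₖ B) = x A ⊗ₖ B)
    (u : Matrix (U × V) (U × V) ℂ) (K : ι → Matrix Y X ℂ) (L : ι → Matrix X Y ℂ)
    (hLK : ∑ i, L i * K i = 1) :
    ∑ i, ptrace₁ ((K i ⊗ₖ (1 : Matrix V V ℂ)) * xI u * (L i ⊗ₖ (1 : Matrix V V ℂ))) =
      ptrace₁ u :=
  (sum_ptrace₁_kronecker_one_mul_mul hLK (xI u)).trans
    (ptrace₁_tensor_id_of_trace_preserving hx hxI u)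

/-- Adjustment lemma (an ignored measurement on a discarded branch does
not affect the other branch): let `x` be a trace-preserving linear map from
`dU`-square matrices to `dX`-square matrices, `xI = x ⊗ id` the unique linear map on
bipartite matrices with `(x ⊗ id)(A ⊗ₖ B) = x(A) ⊗ₖ B`, and `u` any matrix on the
`dU × dV` system. Then for every orthonormal basis `(α i)` of `Fin dX → ℂ`,
`∑ i, Tr₁[(|α i⟩⟨α i| ⊗ₖ 1) * ((x ⊗ id) u) * (|α i⟩⟨α i| ⊗ₖ 1)] = Tr₁ u`. -/
theorem adjustment_lemma
    (dU dV dX : ℕ)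
    (x : Matrix (Fin dU) (Fin dU) ℂ →ₗ[ℂ] Matrix (Fin dX) (Fin dX) ℂ)
    (hx : ∀ M, (x M).trace = M.trace)
    (xI : Matrix (Fin dU × Fin dV) (Fin dU × Fin dV) ℂ
           →ₗ[ℂ] Matrix (Fin dX × Fin dV) (Fin dX × Fin dV) ℂ)
    (hxI : ∀ (A : Matrix (Fin dU) (Fin dU) ℂ) (B : Matrix (Fin dV) (Fin dV) ℂ),
      xI (A ⊗ₖ B) = x A ⊗ₖ B)
    (u : Matrix (Fin dU × Fin dV) (Fin dU × Fin dV) ℂ)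
    (α : Fin dX → (Fin dX → ℂ))
    (hα_orth : ∀ i j, ∑ k, starRingEnd ℂ (α i k) * α j k = if i = j then 1 else 0)
    (hα_span : Submodule.span ℂ (Set.range α) = ⊤) :
    ∑ i, ptrace₁ ((vecMulVec (α i) (star (α i)) ⊗ₖ (1 : Matrix (Fin dV) (Fin dV) ℂ))
          * xI u
          * (vecMulVec (α i) (star (α i)) ⊗ₖ (1 : Matrix (Fin dV) (Fin dV) ℂ)))
      = ptrace₁ u :=
  adjustment_lemma_general x hx xI hxI u _ _ (sum_vecMulVec_star_mul_self_eq_one hα_orth)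
end
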